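/- Let f_m be a homogeneous polynomial of degree m in x_0,...,x_k and γ ∈ ℝ. Then for all x ≠ 0: f_m(D_0,...,D_k)[r^{2γ}] = Σ_{j=0}^m 2^{m-2j} (-1)^{m-j} (-γ)_{m-j} r^{2(γ-m+j)} · (1/j!) Δ_α^j f_m(x), where r² = Σ_j x_j² and (a)_n is the Pochhammer symbol. -/

import Mathlib

open MvPolynomial

variable {k : ℕ}

/-- Reflection of the `j`-th variable: the algebra map sending `X j ↦ -X j`. -/
noncomputable def reflectVar (j : Fin (k + 1)) :
    MvPolynomial (Fin (k + 1)) ℝ →ₐ[ℝ] MvPolynomial (Fin (k + 1)) ℝ :=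
  aeval (fun i => if i = j then -X i else X i)

/-- The `j`-th Dunkl operator on polynomials (exact division by `x_j` via `divMonomial`). -/
noncomputable def dunklD (α : Fin (k + 1) → ℝ) (j : Fin (k + 1))
    (p : MvPolynomial (Fin (k + 1)) ℝ) : MvPolynomial (Fin (k + 1)) ℝ :=
  pderiv j p + C (α j) * (p - reflectVar j p).divMonomial (Finsupp.single j 1)

/-- The Dunkl Laplacian `Δ_α = ∑_j D_j²` on polynomials. -/
noncomputable def dunklLap (α : Fin (k + 1) → ℝ)
    (p : MvPolynomial (Fin (k + 1)) ℝ) : MvPolynomial (Fin (k + 1)) ℝ :=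
  ∑ j, dunklD α j (dunklD α j p)

/-- The `j`-th Dunkl operator acting on functions:
`D_j f (x) = ∂_j f(x) + α_j (f(x) - f(σ_j x))/x_j`. -/
noncomputable def dunklF (α : Fin (k + 1) → ℝ) (j : Fin (k + 1))
    (f : (Fin (k + 1) → ℝ) → ℝ) : (Fin (k + 1) → ℝ) → ℝ :=
  fun x => fderiv ℝ f x (Pi.single j 1)
    + α j * (f x - f (Function.update x j (-(x j)))) / x j

/-- The differential-difference operator `D^β = D_0^{β_0} ∘ ⋯ ∘ D_k^{β_k}`
associated to a monomial exponent `β` (the Dunkl operators commute, so the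
order of composition is immaterial). -/
noncomputable def dunklMonomialOp (α : Fin (k + 1) → ℝ) (β : Fin (k + 1) →₀ ℕ)
    (f : (Fin (k + 1) → ℝ) → ℝ) : (Fin (k + 1) → ℝ) → ℝ :=
  (List.ofFn fun j : Fin (k + 1) => (dunklF α j)^[β j]).foldr (· ∘ ·) id f

/-- `f(D_0,…,D_k)` for a polynomial `f`: substitute the Dunkl operators for the variables. -/
noncomputable def dunklOp (α : Fin (k + 1) → ℝ) (p : MvPolynomial (Fin (k + 1)) ℝ)
    (f : (Fin (k + 1) → ℝ) → ℝ) : (Fin (k + 1) → ℝ) → ℝ :=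
  fun x => ∑ β ∈ p.support, coeff β p * dunklMonomialOp α β f x


theorem lext_mon {f g : MvPolynomial (Fin (k + 1)) ℝ →ₗ[ℝ] MvPolynomial (Fin (k + 1)) ℝ}
    (h : ∀ β c, f (monomial β c) = g (monomial β c)) : f = g := by
  refine LinearMap.ext fun p => ?_
  induction p using MvPolynomial.induction_on' with
  | monomial β c => exact h β c
  | add p q hp hq => rw [map_add, map_add, hp, hq]

noncomputable def thetaD (a : ℝ) (n : ℕ) : ℝ := n + a * (1 - (-1) ^ n)

theorem reflectVar_monomial (j : Fin (k + 1)) (β : Fin (k + 1) →₀ ℕ) (c : ℝ) :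
    reflectVar j (monomial β c) = monomial β (c * (-1) ^ (β j)) := by
  have h : reflectVar (k := k) j (monomial β c) = C c * ∏ i, (if i = j then -X i else X i) ^ (β i) := by
    unfold reflectVar
    rw [aeval_monomial, Finsupp.prod_fintype _ _ (by simp)]
    rfl
  have h2 : ∀ i : Fin (k+1), (if i = j then -X i else X i : MvPolynomial (Fin (k + 1)) ℝ) ^ (β i)
      = (if i = j then C ((-1) ^ (β j)) else 1) * X i ^ (β i) := by
    intro i
    split_ifs with hi
    · subst hi
      rw [neg_pow]; simp
    · simp
  rw [h, Finset.prod_congr rfl (fun i _ => h2 i), Finset.prod_mul_distrib]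
  rw [monomial_eq, Finsupp.prod_fintype _ _ (by simp)]
  simp [mul_assoc]

theorem dunklD_monomial (α : Fin (k + 1) → ℝ) (j : Fin (k + 1)) (β : Fin (k + 1) →₀ ℕ) (c : ℝ) :
    dunklD α j (monomial β c) = monomial (β - Finsupp.single j 1) (c * thetaD (α j) (β j)) := by
  unfold dunklD
  rw [reflectVar_monomial, pderiv_monomial, ← map_sub]
  by_cases h : β j = 0
  · simp [h, thetaD]
  · have : β = Finsupp.single j 1 + (β - Finsupp.single j 1) := by
      ext i
      by_cases hi : i = j
      · subst hi; simp; omega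
      · simp [Finsupp.single_apply, Ne.symm hi]
    have h3 : ∀ d : ℝ, (monomial β d).divMonomial (Finsupp.single j 1)
        = monomial (β - Finsupp.single j 1) d := by
      intro d
      conv_lhs => rw [this]
      rw [show monomial (Finsupp.single j 1 + (β - Finsupp.single j 1)) d
        = monomial (Finsupp.single j 1) 1 * monomial (β - Finsupp.single j 1) d by
          rw [monomial_mul, one_mul]]
      rw [divMonomial_monomial_mul]
    rw [h3, C_mul_monomial, ← map_add]
    congr 1
    unfold thetaD; ring

noncomputable def dunklDl (α : Fin (k + 1) → ℝ) (j : Fin (k + 1)) :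
    MvPolynomial (Fin (k + 1)) ℝ →ₗ[ℝ] MvPolynomial (Fin (k + 1)) ℝ where
  toFun := dunklD α j
  map_add' p q := by
    unfold dunklD
    rw [map_add, map_add, add_sub_add_comm, add_divMonomial]; ring
  map_smul' c p := by
    unfold dunklD
    have h : ∀ q : MvPolynomial (Fin (k + 1)) ℝ, (c • q).divMonomial (Finsupp.single j 1)
        = c • q.divMonomial (Finsupp.single j 1) := by
      intro q; ext β; simp [coeff_divMonomial]
    rw [map_smul (reflectVar j), Derivation.map_smul, ← smul_sub, h, RingHom.id_apply, smul_add, mul_smul_comm]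

noncomputable def dunklLapl (α : Fin (k + 1) → ℝ) :
    MvPolynomial (Fin (k + 1)) ℝ →ₗ[ℝ] MvPolynomial (Fin (k + 1)) ℝ :=
  ∑ j, dunklDl α j ∘ₗ dunklDl α j

theorem dunklLapl_apply (α : Fin (k + 1) → ℝ) (p) : dunklLapl α p = dunklLap α p := by
  simp [dunklLapl, dunklLap, dunklDl]

theorem dunklDl_monomial (α : Fin (k + 1) → ℝ) (j : Fin (k + 1)) (β : Fin (k + 1) →₀ ℕ) (c : ℝ) :
    dunklDl α j (monomial β c) = monomial (β - Finsupp.single j 1) (c * thetaD (α j) (β j)) :=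
  dunklD_monomial α j β c

theorem dunklDl_comm (α : Fin (k + 1) → ℝ) (i j : Fin (k + 1)) (p) :
    dunklDl α i (dunklDl α j p) = dunklDl α j (dunklDl α i p) := by
  by_cases hij : i = j
  · rw [hij]
  suffices h : dunklDl α i ∘ₗ dunklDl α j = dunklDl α j ∘ₗ dunklDl α i from
    LinearMap.congr_fun h p
  refine lext_mon fun β c => ?_
  simp only [LinearMap.comp_apply, dunklDl_monomial]
  rw [tsub_right_comm]
  congr 1
  simp [Finsupp.single_apply, hij, Ne.symm hij]
  ring

theorem dunklDl_lapl (α : Fin (k + 1) → ℝ) (i : Fin (k + 1)) (p) :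
    dunklDl α i (dunklLapl α p) = dunklLapl α (dunklDl α i p) := by
  simp only [dunklLapl, LinearMap.sum_apply, map_sum, LinearMap.comp_apply]
  refine Finset.sum_congr rfl fun j _ => ?_
  rw [dunklDl_comm α i j, dunklDl_comm α i j]

theorem dunklDl_X_mul_ne (α : Fin (k + 1) → ℝ) (i j : Fin (k + 1)) (h : i ≠ j) (p) :
    dunklDl α j (X i * p) = X i * dunklDl α j p := by
  suffices hh : dunklDl α j ∘ₗ LinearMap.mulLeft ℝ (X i) = LinearMap.mulLeft ℝ (X i) ∘ₗ dunklDl α j from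
    LinearMap.congr_fun hh p
  refine lext_mon fun β c => ?_
  simp only [LinearMap.comp_apply, dunklDl_monomial, LinearMap.mulLeft_apply, X, monomial_mul]
  congr 1
  · congr 1
    ext l
    by_cases hl : l = i
    · subst hl; simp [Finsupp.single_apply, Ne.symm h]
    · simp [Finsupp.single_apply, Ne.symm hl]
  · simp [Finsupp.single_apply, h]

theorem dunklDl_sq_X_mul (α : Fin (k + 1) → ℝ) (i : Fin (k + 1)) (p) :
    dunklDl α i (dunklDl α i (X i * p)) =
      X i * dunklDl α i (dunklDl α i p) + (2 : ℝ) • dunklDl α i p := by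
  suffices hh : dunklDl α i ∘ₗ dunklDl α i ∘ₗ LinearMap.mulLeft ℝ (X i) =
      LinearMap.mulLeft ℝ (X i) ∘ₗ dunklDl α i ∘ₗ dunklDl α i + (2 : ℝ) • dunklDl α i from
    LinearMap.congr_fun hh p
  refine lext_mon fun β c => ?_
  simp only [LinearMap.comp_apply, LinearMap.add_apply, LinearMap.smul_apply,
    dunklDl_monomial, LinearMap.mulLeft_apply, X, monomial_mul, smul_monomial]
  rw [add_tsub_cancel_left]
  have e : β i = 0 ∨ β i = 1 ∨ ∃ n, β i = n + 2 := by
    rcases h : β i with _ | _ | n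
    · simp
    · simp
    · exact Or.inr (Or.inr ⟨n, rfl⟩)
  rcases e with e | e | ⟨n, e⟩
  · simp [e, thetaD]
  · simp [e, thetaD, ← map_add]
    congr 1; ring
  · have : Finsupp.single i 1 + (β - Finsupp.single i 1 - Finsupp.single i 1)
        = β - Finsupp.single i 1 := by
      ext l
      by_cases hl : l = i
      · subst hl; simp [e]
      · simp [Finsupp.single_apply, Ne.symm hl]
    rw [this, ← map_add]
    congr 1
    simp [e, thetaD, pow_succ]
    ring

theorem dunklLapl_X_mul (α : Fin (k + 1) → ℝ) (i : Fin (k + 1)) (p) :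
    dunklLapl α (X i * p) = X i * dunklLapl α p + (2 : ℝ) • dunklDl α i p := by
  simp only [dunklLapl, LinearMap.sum_apply, LinearMap.comp_apply, Finset.mul_sum]
  rw [← Finset.add_sum_erase _ _ (Finset.mem_univ i), dunklDl_sq_X_mul,
    ← Finset.add_sum_erase _ (fun j => X i * _) (Finset.mem_univ i)]
  rw [Finset.sum_congr rfl (g := fun j => X i * dunklDl α j (dunklDl α j p))]
  · ring
  · intro j hj
    have hj' := Finset.ne_of_mem_erase hj
    rw [dunklDl_X_mul_ne _ _ _ hj'.symm, dunklDl_X_mul_ne _ _ _ hj'.symm]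

theorem dunklLapl_pow_X_mul (α : Fin (k + 1) → ℝ) (i : Fin (k + 1)) (p) (j : ℕ) :
    (dunklLapl α ^ (j + 1)) (X i * p) = X i * (dunklLapl α ^ (j + 1)) p +
      (2 * (j + 1) : ℝ) • dunklDl α i ((dunklLapl α ^ j) p) := by
  induction j with
  | zero => simp [dunklLapl_X_mul]
  | succ j ih =>
    rw [pow_succ' _ (j + 1), Module.End.mul_apply, ih, map_add, map_smul, dunklLapl_X_mul, ← dunklDl_lapl]
    have h1 : ∀ n q, dunklLapl α ((dunklLapl α ^ n) q) = (dunklLapl α ^ (n + 1)) q := by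
      intro n q; rw [pow_succ' _ n, Module.End.mul_apply]
    rw [h1, h1, ← Module.End.mul_apply, ← pow_succ']
    push_cast
    module

theorem eval_hasFDerivAt (p : MvPolynomial (Fin (k + 1)) ℝ) (x : Fin (k + 1) → ℝ) :
    ∃ L : (Fin (k + 1) → ℝ) →L[ℝ] ℝ, HasFDerivAt (fun y => eval y p) L x ∧
      ∀ i, L (Pi.single i 1) = eval x (pderiv i p) := by
  induction p using MvPolynomial.induction_on with
  | C a => exact ⟨0, by simpa using hasFDerivAt_const a x, by simp⟩
  | add p q hp hq =>
    obtain ⟨L, h1, h2⟩ := hp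
    obtain ⟨M, h3, h4⟩ := hq
    exact ⟨L + M, by simp only [map_add]; exact h1.add h3, by simp [h2, h4]⟩
  | mul_X p j hp =>
    obtain ⟨L, h1, h2⟩ := hp
    have h3 : HasFDerivAt (fun y : Fin (k + 1) → ℝ => y j)
      (ContinuousLinearMap.proj (R := ℝ) (φ := fun _ : Fin (k + 1) => ℝ) j) x := hasFDerivAt_apply j x
    refine ⟨_, by simp only [map_mul, eval_X]; exact h1.mul h3, fun i => ?_⟩
    simp [h2, pderiv_X, Pi.single_apply]
    by_cases hij : i = j
    · subst hij; simp
    · simp [hij, Ne.symm hij]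

theorem eval_reflectVar (p : MvPolynomial (Fin (k + 1)) ℝ) (j) (x : Fin (k + 1) → ℝ) :
    eval x (reflectVar j p) = eval (Function.update x j (-(x j))) p := by
  induction p using MvPolynomial.induction_on with
  | C a => simp [reflectVar]
  | add p q hp hq => simp [hp, hq]
  | mul_X p i hp => 
    rw [map_mul, map_mul, map_mul, hp]
    congr 1
    by_cases h : i = j
    · subst h; simp [reflectVar]
    · simp [reflectVar, h]

theorem X_mul_div (p : MvPolynomial (Fin (k + 1)) ℝ) (j : Fin (k + 1)) :
    X j * (p - reflectVar j p).divMonomial (Finsupp.single j 1) = p - reflectVar j p := by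
  have h : X j ∣ p - reflectVar j p := by
    induction p using MvPolynomial.induction_on with
    | C a => simp [reflectVar]
    | add p q hp hq => rw [map_add, add_sub_add_comm]; exact dvd_add hp hq
    | mul_X p i hp =>
      rw [map_mul]
      by_cases h : i = j
      · subst h
        simp only [reflectVar, aeval_X, if_true]
        exact dvd_sub (dvd_mul_left _ _) (Dvd.dvd.mul_left (by simp) _)
      · have : reflectVar j (X i) = X i := by simp [reflectVar, h]
        rw [this, ← sub_mul]
        exact Dvd.dvd.mul_right hp _
  obtain ⟨q, hq⟩ := h
  rw [hq, X, divMonomial_monomial_mul]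

theorem eval_dunklD (α : Fin (k + 1) → ℝ) (j) (p : MvPolynomial (Fin (k + 1)) ℝ)
    (x : Fin (k + 1) → ℝ) (hx : x j ≠ 0) :
    eval x (dunklDl α j p) = eval x (pderiv j p) +
      α j * (eval x p - eval (Function.update x j (-(x j))) p) / x j := by
  change eval x (dunklD α j p) = _
  unfold dunklD
  rw [← eval_reflectVar, ← map_sub, ← X_mul_div p j]
  simp
  field_simp

theorem sumsq_update (x : Fin (k + 1) → ℝ) (i : Fin (k + 1)) :
    ∑ j, (Function.update x i (-(x i)) j) ^ 2 = ∑ j, (x j) ^ 2 := by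
  refine Finset.sum_congr rfl fun j _ => ?_
  by_cases h : j = i
  · subst h; simp
  · simp [h]

theorem sumsq_pos (x : Fin (k + 1) → ℝ) (hx : ∀ j, x j ≠ 0) : 0 < ∑ j, (x j) ^ 2 :=
  Finset.sum_pos (fun j _ => pow_pos_of_sq (hx j)) ⟨0, Finset.mem_univ _⟩
where pow_pos_of_sq {a : ℝ} (h : a ≠ 0) : 0 < a ^ 2 := by positivity

theorem sumsq_hasFDerivAt (x : Fin (k + 1) → ℝ) :
    ∃ L : (Fin (k + 1) → ℝ) →L[ℝ] ℝ, HasFDerivAt (fun y : Fin (k + 1) → ℝ => ∑ j, (y j) ^ 2) L x ∧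
      ∀ i, L (Pi.single i 1) = 2 * x i := by
  obtain ⟨L, h1, h2⟩ := eval_hasFDerivAt (∑ j, (X j) ^ 2) x
  refine ⟨L, by simpa using h1, fun i => ?_⟩
  rw [h2, map_sum, map_sum, Finset.sum_eq_single i]
  · simp
  · intro j _ hj
    simp [pderiv_X, Pi.single_apply, hj]
  · simp

theorem dunklF_sum (α : Fin (k + 1) → ℝ) (i : Fin (k + 1)) (n : ℕ) (a s : ℕ → ℝ)
    (q : ℕ → MvPolynomial (Fin (k + 1)) ℝ) (x : Fin (k + 1) → ℝ) (hx : ∀ j, x j ≠ 0) :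
    dunklF α i (fun y => ∑ j ∈ Finset.range n, a j * (∑ l, (y l) ^ 2) ^ (s j) * eval y (q j)) x
      = ∑ j ∈ Finset.range n, a j * (2 * s j * (∑ l, (x l) ^ 2) ^ (s j - 1) * eval x (X i * q j)
        + (∑ l, (x l) ^ 2) ^ (s j) * eval x (dunklDl α i (q j))) := by
  obtain ⟨L, h1, h2⟩ := sumsq_hasFDerivAt x
  choose M h3 h4 using fun j => eval_hasFDerivAt (q j) x
  have hR := sumsq_pos x hx
  have h5 : ∀ j, HasFDerivAt (fun y => a j * (∑ l, (y l) ^ 2) ^ (s j) * eval y (q j)) _ x :=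
    fun j => ((h1.rpow_const (p := s j) (Or.inl hR.ne')).const_mul (a j)).mul (h3 j)
  have h6 := HasFDerivAt.fun_sum (u := Finset.range n) (fun j _ => h5 j)
  unfold dunklF
  rw [h6.fderiv]
  simp only [sumsq_update]
  rw [← Finset.sum_sub_distrib, Finset.mul_sum, Finset.sum_div, ContinuousLinearMap.sum_apply,
    ← Finset.sum_add_distrib]
  refine Finset.sum_congr rfl fun j _ => ?_
  rw [eval_dunklD _ _ _ _ (hx i)]
  simp [h2, h4]
  ring

noncomputable def hobG (α : Fin (k + 1) → ℝ) (γ : ℝ) (m : ℕ) (p : MvPolynomial (Fin (k + 1)) ℝ)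
    (x : Fin (k + 1) → ℝ) : ℝ :=
  ∑ j ∈ Finset.range (m + 1),
    ((2 : ℝ) ^ ((m : ℤ) - 2 * (j : ℤ)) * (-1) ^ (m - j) *
          (ascPochhammer ℝ (m - j)).eval (-γ) * (1 / (j.factorial : ℝ))) *
      (∑ i, (x i) ^ 2) ^ (γ - m + j) * eval x ((dunklLapl α ^ j) p)

theorem dunklF_congr (α : Fin (k + 1) → ℝ) (i : Fin (k + 1)) (f g : (Fin (k + 1) → ℝ) → ℝ)
    (h : ∀ x, (∀ j, x j ≠ 0) → f x = g x) (x : Fin (k + 1) → ℝ) (hx : ∀ j, x j ≠ 0) :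
    dunklF α i f x = dunklF α i g x := by
  have hev : f =ᶠ[nhds x] g := by
    have : ∀ᶠ y in nhds x, ∀ j, y j ≠ 0 :=
      Filter.eventually_all.2 fun j => (continuous_apply j).continuousAt.eventually_ne (hx j)
    exact this.mono h
  unfold dunklF
  rw [hev.fderiv_eq, h x hx, h (Function.update x i (-(x i)))]
  intro j
  by_cases hj : j = i
  · subst hj; simpa using hx j
  · simpa [hj] using hx j

theorem hobG_step (α : Fin (k + 1) → ℝ) (γ : ℝ) (m : ℕ) (p : MvPolynomial (Fin (k + 1)) ℝ)
    (hp : (dunklLapl α ^ (m + 1)) p = 0) (i : Fin (k + 1))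
    (x : Fin (k + 1) → ℝ) (hx : ∀ j, x j ≠ 0) :
    dunklF α i (hobG α γ m p) x = hobG α γ (m + 1) (X i * p) x := by
  have h := dunklF_sum α i (m + 1) (fun j => ((2 : ℝ) ^ ((m : ℤ) - 2 * (j : ℤ)) * (-1) ^ (m - j) *
          (ascPochhammer ℝ (m - j)).eval (-γ) * (1 / (j.factorial : ℝ))))
      (fun j => γ - m + j) (fun j => (dunklLapl α ^ j) p) x hx
  refine Eq.trans h ?_
  unfold hobG
  set R := ∑ l, (x l) ^ 2
  -- split the commutator
  set c : ℕ → ℕ → ℝ := fun m j => (2 : ℝ) ^ ((m : ℤ) - 2 * (j : ℤ)) * (-1) ^ (m - j) *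
          (ascPochhammer ℝ (m - j)).eval (-γ) * (1 / (j.factorial : ℝ)) with hc
  have e1 : ∀ j ≤ m, c (m + 1) j = c m j * (2 * (γ - m + j)) := by
    intro j hj
    obtain ⟨d, rfl⟩ := Nat.exists_eq_add_of_le hj
    simp only [hc]
    rw [show j + d + 1 - j = d + 1 by omega, show j + d - j = d by omega, ascPochhammer_succ_right,
      show ((j + d + 1 : ℕ) : ℤ) - 2 * (j : ℤ) = ((j + d : ℕ) : ℤ) - 2 * (j : ℤ) + 1 by push_cast; ring,
      zpow_add_one₀ (by norm_num)]
    simp only [Polynomial.eval_mul, Polynomial.eval_add, Polynomial.eval_X, Polynomial.eval_natCast,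
      pow_succ]
    push_cast
    ring
  have e2 : ∀ j ≤ m, c (m + 1) (j + 1) * (2 * (j + 1)) = c m j := by
    intro j hj
    obtain ⟨d, rfl⟩ := Nat.exists_eq_add_of_le hj
    simp only [hc]
    rw [show j + d + 1 - (j + 1) = d by omega, show j + d - j = d by omega,
      show ((j + d : ℕ) : ℤ) - 2 * (j : ℤ) =
        ((j + d + 1 : ℕ) : ℤ) - 2 * ((j + 1 : ℕ) : ℤ) + 1 by push_cast; ring,
      zpow_add_one₀ (by norm_num), Nat.factorial_succ]
    push_cast
    field_simp
  have e3 : ∑ j ∈ Finset.range (m + 1 + 1), c (m + 1) j * R ^ (γ - (m + 1 : ℕ) + j) *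
        eval x ((dunklLapl α ^ j) (X i * p))
      = ∑ j ∈ Finset.range (m + 1 + 1), c (m + 1) j * R ^ (γ - (m + 1 : ℕ) + j) *
        eval x (X i * (dunklLapl α ^ j) p)
      + ∑ j ∈ Finset.range (m + 1), c (m + 1) (j + 1) * R ^ (γ - (m + 1 : ℕ) + (j + 1 : ℕ)) *
        ((2 * (j + 1)) * eval x (dunklDl α i ((dunklLapl α ^ j) p))) := by
    rw [Finset.sum_range_succ', Finset.sum_range_succ' _ (m + 1), add_right_comm,
      ← Finset.sum_add_distrib]
    congr 1
    refine Finset.sum_congr rfl fun j _ => ?_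
    rw [dunklLapl_pow_X_mul, map_add, smul_eval]
    ring
  change _ = ∑ j ∈ Finset.range (m + 1 + 1), c (m + 1) j * R ^ (γ - (m + 1 : ℕ) + j) *
        eval x ((dunklLapl α ^ j) (X i * p))
  rw [e3, Finset.sum_range_succ _ (m + 1), hp, mul_zero, map_zero, mul_zero, add_zero,
    ← Finset.sum_add_distrib]
  refine Finset.sum_congr rfl fun j hj => ?_
  have hj' : j ≤ m := by simpa [Nat.lt_succ_iff] using hj
  rw [show γ - ((m + 1 : ℕ) : ℝ) + (j + 1 : ℕ) = γ - m + j by push_cast; ring,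
    show γ - ((m + 1 : ℕ) : ℝ) + j = γ - m + j - 1 by push_cast; ring, e1 j hj']
  change c m j * (2 * (γ - m + j) * R ^ (γ - m + j - 1) * eval x (X i * (dunklLapl α ^ j) p)
        + R ^ (γ - m + j) * eval x (dunklDl α i ((dunklLapl α ^ j) p))) = _
  linear_combination (-(R ^ (γ - m + j) * eval x (dunklDl α i ((dunklLapl α ^ j) p)))) * e2 j hj'

def HobGood (α : Fin (k + 1) → ℝ) (γ : ℝ) (m : ℕ) (p : MvPolynomial (Fin (k + 1)) ℝ)
    (f : (Fin (k + 1) → ℝ) → ℝ) : Prop :=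
  (∀ j, m < j → (dunklLapl α ^ j) p = 0) ∧ ∀ x, (∀ j, x j ≠ 0) → f x = hobG α γ m p x

theorem HobGood.step {α : Fin (k + 1) → ℝ} {γ : ℝ} {m : ℕ} {p : MvPolynomial (Fin (k + 1)) ℝ}
    {f : (Fin (k + 1) → ℝ) → ℝ} (h : HobGood α γ m p f) (i : Fin (k + 1)) :
    HobGood α γ (m + 1) (X i * p) (dunklF α i f) := by
  refine ⟨fun j hj => ?_, fun x hx => ?_⟩
  · obtain ⟨j, rfl⟩ : ∃ l, j = l + 1 := ⟨j - 1, by omega⟩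
    rw [dunklLapl_pow_X_mul, h.1 _ (by omega), h.1 _ (by omega)]
    simp
  · rw [dunklF_congr α i f _ h.2 x hx, hobG_step α γ m p (h.1 _ (by omega)) i x hx]

theorem HobGood.iter {α : Fin (k + 1) → ℝ} {γ : ℝ} {m : ℕ} {p : MvPolynomial (Fin (k + 1)) ℝ}
    {f : (Fin (k + 1) → ℝ) → ℝ} (h : HobGood α γ m p f) (i : Fin (k + 1)) (b : ℕ) :
    HobGood α γ (b + m) (X i ^ b * p) ((dunklF α i)^[b] f) := by
  induction b with
  | zero => simpa using h
  | succ b ih =>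
    rw [Function.iterate_succ_apply', pow_succ', mul_assoc, add_right_comm]
    exact ih.step i

theorem HobGood.list {α : Fin (k + 1) → ℝ} {γ : ℝ} {m : ℕ} {p : MvPolynomial (Fin (k + 1)) ℝ}
    {f : (Fin (k + 1) → ℝ) → ℝ} (h : HobGood α γ m p f) (β : Fin (k + 1) →₀ ℕ)
    (l : List (Fin (k + 1))) :
    HobGood α γ ((l.map β).sum + m) ((l.map fun i => X i ^ (β i)).prod * p)
      ((l.map fun j => (dunklF α j)^[β j]).foldr (· ∘ ·) id f) := by
  induction l with
  | nil => simpa using h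
  | cons i l ih =>
    simp only [List.map_cons, List.sum_cons, List.prod_cons, List.foldr_cons, mul_assoc, add_assoc,
      Function.comp_apply]
    exact ih.iter i (β i)

theorem hobGood_one (α : Fin (k + 1) → ℝ) (γ : ℝ) :
    HobGood α γ 0 1 (fun y => (∑ j, (y j) ^ 2) ^ γ) := by
  have h1 : dunklLapl α 1 = 0 := by
    have : ∀ j, dunklDl α j 1 = 0 := by
      intro j
      have := dunklDl_monomial α j 0 1
      simpa [thetaD] using this
    simp [dunklLapl, this]
  refine ⟨fun j hj => ?_, fun x hx => ?_⟩
  · obtain ⟨j, rfl⟩ : ∃ l, j = l + 1 := ⟨j - 1, by omega⟩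
    rw [pow_succ, Module.End.mul_apply, h1, map_zero]
  · simp [hobG]

theorem hobGood_monomial (α : Fin (k + 1) → ℝ) (γ : ℝ) (β : Fin (k + 1) →₀ ℕ) :
    HobGood α γ β.degree (monomial β 1)
      (dunklMonomialOp α β (fun y => (∑ j, (y j) ^ 2) ^ γ)) := by
  have h := (hobGood_one α γ).list β (List.finRange (k + 1))
  unfold dunklMonomialOp
  rw [List.ofFn_eq_map]
  convert h using 1
  · rw [Finsupp.degree_eq_sum, ← List.ofFn_eq_map, List.sum_ofFn, add_zero]
  · rw [← List.ofFn_eq_map, List.prod_ofFn, mul_one, monomial_eq, Finsupp.prod_fintype _ _ (by simp)]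
    simp

/-- Corollary 5.4: for a homogeneous polynomial `f_m` of degree `m` and `γ ∈ ℝ`,
`f_m(D_0,…,D_k)[r^{2γ}] = ∑_{j=0}^m 2^{m-2j} (-1)^{m-j} (-γ)_{m-j} r^{2(γ-m+j)} (1/j!) Δ_α^j f_m(x)`. -/
theorem hobson_formula_rpow (α : Fin (k + 1) → ℝ) (m : ℕ)
    (p : MvPolynomial (Fin (k + 1)) ℝ) (hp : p.IsHomogeneous m)
    (γ : ℝ) (x : Fin (k + 1) → ℝ) (hx : ∀ j, x j ≠ 0) :
    dunklOp α p (fun y => (∑ j, (y j) ^ 2) ^ γ) x =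
      ∑ j ∈ Finset.range (m + 1),
        (2 : ℝ) ^ ((m : ℤ) - 2 * (j : ℤ)) * (-1) ^ (m - j) *
          (ascPochhammer ℝ (m - j)).eval (-γ) * (∑ i, (x i) ^ 2) ^ (γ - m + j) *
          (1 / (j.factorial : ℝ)) * eval x ((dunklLap α)^[j] p) := by
  have hl : ∀ j q, (dunklLap α)^[j] q = (dunklLapl α ^ j) q := by
    intro j q
    rw [Module.End.pow_apply]
    congr 1
    congr 1
    funext q
    exact (dunklLapl_apply α q).symm
  have hG : ∑ j ∈ Finset.range (m + 1),
        (2 : ℝ) ^ ((m : ℤ) - 2 * (j : ℤ)) * (-1) ^ (m - j) *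
          (ascPochhammer ℝ (m - j)).eval (-γ) * (∑ i, (x i) ^ 2) ^ (γ - m + j) *
          (1 / (j.factorial : ℝ)) * eval x ((dunklLap α)^[j] p) = hobG α γ m p x := by
    unfold hobG
    refine Finset.sum_congr rfl fun j _ => ?_
    rw [hl]; ring
  rw [hG]
  have hlin : hobG α γ m p x = ∑ β ∈ p.support, coeff β p * hobG α γ m (monomial β 1) x := by
    unfold hobG
    simp only [Finset.mul_sum]
    rw [Finset.sum_comm]
    refine Finset.sum_congr rfl fun j _ => ?_
    conv_lhs => rw [p.as_sum, map_sum, map_sum, Finset.mul_sum]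
    refine Finset.sum_congr rfl fun β _ => ?_
    have : monomial β (coeff β p) = coeff β p • monomial β (1 : ℝ) := by
      rw [smul_monomial]; simp
    rw [this, map_smul, smul_eval]
    ring
  rw [hlin]
  unfold dunklOp
  refine Finset.sum_congr rfl fun β hβ => ?_
  have hd : β.degree = m := by
    have := hp (mem_support_iff.1 hβ)
    rw [← this, Finsupp.degree_eq_weight_one]
    rfl
  rw [(hobGood_monomial α γ β).2 x hx, hd]
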